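/- arXiv:2110.12699 — 2 statements merged into one kernel-verified Lean document; each statement's English description precedes it below -/
import Mathlib

section
/- The formula φ_synch expresses synchronicity: let o ∈ AP and φ_synch := G((o ∧ X¬o) ⩔ (¬o ∧ Xo)). For every team T = (t_i)_{i∈ι} and every initial tef τ for ι: (T,τ) ⊨ φ_synch if and only if τ(n)(i) = n for all n ∈ ℕ and i ∈ ι (i.e., τ is the synchronous initial tef) and for all i, j ∈ ι and n ∈ ℕ: (o ∈ t_i(n) ↔ o ∈ t_j(n)) and (o ∈ t_i(n) ↔ o ∉ t_i(n+1)). -/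
namespace TTS

abbrev Trace (AP : Type) := ℕ → Set AP

def IsStutTef {ι : Type} (τ : ℕ → ι → ℕ) : Prop :=
  ∀ n i, τ n i ≤ τ (n + 1) i

def IsTef {ι : Type} (τ : ℕ → ι → ℕ) : Prop :=
  IsStutTef τ ∧ (∀ n, τ n ≠ τ (n + 1)) ∧ (∀ n i, τ (n + 1) i ≤ τ n i + 1)

def Initial {ι : Type} (τ : ℕ → ι → ℕ) : Prop := ∀ i, τ 0 i = 0

def Fair {ι : Type} (τ : ℕ → ι → ℕ) : Prop :=
  ∀ (m : ℕ) (i : ι), ∃ n, m ≤ τ n i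

def Synchronous {ι : Type} (τ : ℕ → ι → ℕ) : Prop :=
  ∀ n (i j : ι), τ n i = τ n j

def shift {ι : Type} (τ : ℕ → ι → ℕ) (k : ℕ) : ℕ → ι → ℕ := fun n => τ (n + k)

/-- TeamLTL formulas extended with Boolean disjunction ⩔, the non-emptiness
atom NE, and the universal subteam quantifier A¹. -/
inductive EFormula (AP : Type) : Type
  | atom : AP → EFormula AP
  | natom : AP → EFormula AP
  | and : EFormula AP → EFormula AP → EFormula AP
  | or : EFormula AP → EFormula AP → EFormula AP
  | bor : EFormula AP → EFormula AP → EFormula AP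
  | NE : EFormula AP
  | A1 : EFormula AP → EFormula AP
  | X : EFormula AP → EFormula AP
  | U : EFormula AP → EFormula AP → EFormula AP
  | W : EFormula AP → EFormula AP → EFormula AP

def esat {AP : Type} : {ι : Type} → (ι → Trace AP) → (ℕ → ι → ℕ) → EFormula AP → Prop
  | _, T, τ, .atom p => ∀ i, p ∈ T i (τ 0 i)
  | _, T, τ, .natom p => ∀ i, p ∉ T i (τ 0 i)
  | _, T, τ, .and φ ψ => esat T τ φ ∧ esat T τ ψ
  | ι, T, τ, .or φ ψ =>
      ∃ P : ι → Prop,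
        esat (fun i : {i // P i} => T i.1) (fun n i => τ n i.1) φ ∧
        esat (fun i : {i // ¬ P i} => T i.1) (fun n i => τ n i.1) ψ
  | _, T, τ, .bor φ ψ => esat T τ φ ∨ esat T τ ψ
  | ι, _, _, .NE => Nonempty ι
  | ι, T, τ, .A1 φ =>
      ∀ i : ι, esat (fun j : {j // j = i} => T j.1) (fun n j => τ n j.1) φ
  | _, T, τ, .X φ => esat T (shift τ 1) φ
  | _, T, τ, .U φ ψ =>
      ∃ k, esat T (shift τ k) ψ ∧ ∀ m, m < k → esat T (shift τ m) φ
  | _, T, τ, .W φ ψ =>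
      ∀ k, esat T (shift τ k) φ ∨ ∃ m, m ≤ k ∧ esat T (shift τ m) ψ

def esatE {AP ι : Type} (T : ι → Trace AP) (φ : EFormula AP) : Prop :=
  ∃ τ : ℕ → ι → ℕ, IsTef τ ∧ Initial τ ∧ esat T τ φ

def esatA {AP ι : Type} (T : ι → Trace AP) (φ : EFormula AP) : Prop :=
  ∀ τ : ℕ → ι → ℕ, IsTef τ → Initial τ → esat T τ φ

def esatS {AP ι : Type} (T : ι → Trace AP) (φ : EFormula AP) : Prop :=
  esat T (fun n _ => n) φ

/-- Plain TeamLTL formulas (negation normal form, no extended connectives). -/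
inductive Formula (AP : Type) : Type
  | atom : AP → Formula AP
  | natom : AP → Formula AP
  | and : Formula AP → Formula AP → Formula AP
  | or : Formula AP → Formula AP → Formula AP
  | X : Formula AP → Formula AP
  | U : Formula AP → Formula AP → Formula AP
  | W : Formula AP → Formula AP → Formula AP

/-- Embedding of plain TeamLTL formulas into the extended syntax. -/
def Formula.toE {AP : Type} : Formula AP → EFormula AP
  | .atom p => .atom p
  | .natom p => .natom p
  | .and φ ψ => .and φ.toE ψ.toE
  | .or φ ψ => .or φ.toE ψ.toE
  | .X φ => .X φ.toE
  | .U φ ψ => .U φ.toE ψ.toE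
  | .W φ ψ => .W φ.toE ψ.toE

def sat {AP ι : Type} (T : ι → Trace AP) (τ : ℕ → ι → ℕ) (φ : Formula AP) : Prop :=
  esat T τ φ.toE

def satE {AP ι : Type} (T : ι → Trace AP) (φ : Formula AP) : Prop :=
  ∃ τ : ℕ → ι → ℕ, IsTef τ ∧ Initial τ ∧ sat T τ φ

def satA {AP ι : Type} (T : ι → Trace AP) (φ : Formula AP) : Prop :=
  ∀ τ : ℕ → ι → ℕ, IsTef τ → Initial τ → sat T τ φ

def satS {AP ι : Type} (T : ι → Trace AP) (φ : Formula AP) : Prop :=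
  sat T (fun n _ => n) φ

/-- The team T_o over AP ∪ {o}: the fresh proposition o (here: none) is added
at exactly the even positions of every trace. -/
def addO {AP ι : Type} (T : ι → Trace AP) : ι → Trace (Option AP) :=
  fun i n => {x | (∃ p, x = some p ∧ p ∈ T i n) ∨ (x = none ∧ Even n)}

/-- Mapping a plain formula along a renaming of atomic propositions. -/
def Formula.map {AP AP' : Type} (f : AP → AP') : Formula AP → Formula AP'
  | .atom p => .atom (f p)
  | .natom p => .natom (f p)
  | .and φ ψ => .and (φ.map f) (ψ.map f)
  | .or φ ψ => .or (φ.map f) (ψ.map f)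
  | .X φ => .X (φ.map f)
  | .U φ ψ => .U (φ.map f) (ψ.map f)
  | .W φ ψ => .W (φ.map f) (ψ.map f)
/-- φ_synch := G((o ∧ X¬o) ⩔ (¬o ∧ Xo)), where Gφ := φ W ⊥ and ⊥ := o ∧ ¬o. -/
def phiSynch {AP : Type} (o : AP) : EFormula AP :=
  .W (.bor (.and (.atom o) (.X (.natom o)))
           (.and (.natom o) (.X (.atom o))))
     (.and (.atom o) (.natom o))

/-!
`φ_synch` says that the traces, read along `τ`, agree on `o` at every instant and flip `o` from
each instant to the next. A trace that stays in place cannot flip `o`, so every trace advances at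
every instant, by exactly one position as `τ` is stepwise. Hence an initial `τ` has `τ n i = n`,
and reading along `τ` is then just reading the traces themselves.
-/

theorem esat_bot_iff {AP ι : Type} (T : ι → Trace AP) (τ : ℕ → ι → ℕ) (p : AP) :
    esat T τ (.and (.atom p) (.natom p)) ↔ IsEmpty ι := by
  simp only [esat]
  exact ⟨fun h => ⟨fun i => h.2 i (h.1 i)⟩, fun _ => ⟨isEmptyElim, isEmptyElim⟩⟩

-- The empty team satisfies `⊥`, so on it `φ W ⊥` holds even if `φ` does not, as for `φ = NE`.
theorem esat_always_iff {AP ι : Type} (T : ι → Trace AP) (τ : ℕ → ι → ℕ) (φ : EFormula AP)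
    (p : AP) :
    esat T τ (.W φ (.and (.atom p) (.natom p))) ↔
      IsEmpty ι ∨ ∀ k, esat T (shift τ k) φ := by
  rw [esat]
  simp only [esat_bot_iff]
  rcases isEmpty_or_nonempty ι with hι | hι
  · simp only [hι, and_true, true_or, iff_true]
    exact fun k => Or.inr ⟨k, le_rfl⟩
  · simp only [not_isEmpty_of_nonempty, and_false, exists_false, or_false, false_or]

theorem forall_and_not_or_forall_not_and_iff {α : Type*} {p q : α → Prop} :
    ((∀ a, p a ∧ ¬ q a) ∨ ∀ a, ¬ p a ∧ q a) ↔ ∀ a b, (p a ↔ p b) ∧ (p a ↔ ¬ q a) := by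
  constructor
  · rintro (h | h) a b
    · exact ⟨iff_of_true (h a).1 (h b).1, iff_of_true (h a).1 (h a).2⟩
    · exact ⟨iff_of_false (h a).1 (h b).1, iff_of_false (h a).1 (not_not.2 (h a).2)⟩
  · intro h
    by_cases hp : ∃ a, p a
    · obtain ⟨a, ha⟩ := hp
      have hall b : p b := (h a b).1.1 ha
      exact Or.inl fun b => ⟨hall b, (h b b).2.1 (hall b)⟩
    · have hnone b : ¬ p b := fun hb => hp ⟨b, hb⟩
      exact Or.inr fun b => ⟨hnone b, not_not.1 fun hq => hnone b ((h b b).2.2 hq)⟩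

/-- The traces of `T` agree on `o` at every position, and each of them flips `o` at every step.
The family `T` may be a team or, as in `esat_phiSynch_iff`, a team read along a tef. -/
def AlternatesInUnison {AP ι : Type} (o : AP) (T : ι → Trace AP) : Prop :=
  ∀ (i j : ι) (n : ℕ), (o ∈ T i n ↔ o ∈ T j n) ∧ (o ∈ T i n ↔ o ∉ T i (n + 1))

theorem esat_phiSynch_iff {AP ι : Type} (o : AP) (T : ι → Trace AP) (τ : ℕ → ι → ℕ) :
    esat T τ (phiSynch o) ↔ AlternatesInUnison o fun i n => T i (τ n i) := by
  rw [phiSynch, esat_always_iff]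
  simp only [esat, shift, Nat.zero_add, Nat.add_comm 1, ← forall_and,
    forall_and_not_or_forall_not_and_iff]
  constructor
  · rintro (hι | h) i j n
    · exact hι.elim i
    · exact h n i j
  · exact fun h => Or.inr fun n i j => h i j n

theorem apply_eq_apply_zero_add_of_ne_succ {f : ℕ → ℕ} (hmono : ∀ n, f n ≤ f (n + 1))
    (hstep : ∀ n, f (n + 1) ≤ f n + 1) (hne : ∀ n, f n ≠ f (n + 1)) (n : ℕ) :
    f n = f 0 + n := by
  induction n with
  | zero => rfl
  | succ n ih =>
    have hsucc : f (n + 1) = f n + 1 := (hstep n).antisymm ((hmono n).lt_of_ne (hne n))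
    rw [hsucc, ih, Nat.add_assoc]

theorem AlternatesInUnison.apply_ne_apply_succ {AP ι : Type} {o : AP} {T : ι → Trace AP}
    {τ : ℕ → ι → ℕ} (h : AlternatesInUnison o fun i n => T i (τ n i)) (n : ℕ) (i : ι) :
    τ n i ≠ τ (n + 1) i := by
  intro heq
  have hflip : o ∈ T i (τ n i) ↔ o ∉ T i (τ (n + 1) i) := (h i i n).2
  rw [← heq] at hflip
  exact iff_not_self hflip

theorem phiSynch_expresses_synchronicity_general {AP ι : Type} (o : AP)
    (T : ι → Trace AP) (τ : ℕ → ι → ℕ) (hstut : IsStutTef τ)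
    (hstep : ∀ n i, τ (n + 1) i ≤ τ n i + 1) (hinit : Initial τ) :
    esat T τ (phiSynch o) ↔ (∀ n (i : ι), τ n i = n) ∧ AlternatesInUnison o T := by
  rw [esat_phiSynch_iff]
  constructor
  · intro h
    have hsync n (i : ι) : τ n i = n := by
      have hn : τ n i = τ 0 i + n :=
        apply_eq_apply_zero_add_of_ne_succ (hstut · i) (hstep · i) (h.apply_ne_apply_succ · i) n
      rwa [hinit i, Nat.zero_add] at hn
    exact ⟨hsync, by simpa only [hsync] using h⟩
  · rintro ⟨hsync, halt⟩
    simpa only [hsync] using halt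

/-- φ_synch expresses synchronicity: it holds exactly for the synchronous
initial tef on teams that alternate on o. -/
theorem phiSynch_expresses_synchronicity (AP ι : Type) (o : AP)
    (T : ι → Trace AP) (τ : ℕ → ι → ℕ) (hτ : IsTef τ) (hinit : Initial τ) :
    esat T τ (phiSynch o) ↔
      ((∀ n (i : ι), τ n i = n) ∧
        ∀ (i j : ι) (n : ℕ),
          (o ∈ T i n ↔ o ∈ T j n) ∧ (o ∈ T i n ↔ o ∉ T i (n + 1))) :=
  phiSynch_expresses_synchronicity_general o T τ hτ.1 hτ.2.2 hinit

end TTS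
end

section
/- The formula φ_fair expresses fairness: let o ∈ AP and φ_fair := A¹ G((o ∧ F¬o) ∨ (¬o ∧ Fo)). Let T = (t_i)_{i∈ι} be a team such that o ∈ t_i(n) iff n is even, for all i ∈ ι and n ∈ ℕ, and let τ be a tef for ι. Then (T,τ) ⊨ φ_fair if and only if τ is fair. -/
namespace TTS

/-- ⊤ := o ∨ ¬o, ⊥ := o ∧ ¬o, Fφ := ⊤ U φ, Gφ := φ W ⊥ for the fixed o. -/
def F' {AP : Type} (o : AP) (φ : EFormula AP) : EFormula AP :=
  .U (.or (.atom o) (.natom o)) φ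

def G' {AP : Type} (o : AP) (φ : EFormula AP) : EFormula AP :=
  .W φ (.and (.atom o) (.natom o))

/-- φ_fair := A¹ G((o ∧ F¬o) ∨ (¬o ∧ Fo)). -/
def phiFair {AP : Type} (o : AP) : EFormula AP :=
  .A1 (G' o (.or (.and (.atom o) (F' o (.natom o)))
                 (.and (.natom o) (F' o (.atom o)))))

/-!
On a single trace `t`, `φ_fair` says that the truth value of `o` along `n ↦ t (τ n)` flips
infinitely often. Each flip forces `τ` to advance, so the formula implies fairness on any team.
Conversely, a fair `τ` advancing by at most one position per step visits every position
from its current one on, so it cannot jump over the flips of `o` on the trace itself.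
-/

open Filter

/-- `s` changes its truth value infinitely often: no value `s n` persists forever. This is the
property of a sequence of truth values of `o` that `phiFair` states for each trace. -/
def FlipsForever (s : ℕ → Prop) : Prop :=
  ∀ n, ∃ m, n ≤ m ∧ ¬(s m ↔ s n)

theorem flipsForever_even : FlipsForever Even :=
  fun n => ⟨n + 1, n.le_succ, by simp only [Nat.even_add_one, not_iff_self, not_false_eq_true]⟩

theorem FlipsForever.tendsto_atTop_of_comp {s : ℕ → Prop} {f : ℕ → ℕ}
    (hs : FlipsForever fun n => s (f n)) (hf : Monotone f) : Tendsto f atTop atTop := by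
  refine tendsto_atTop_atTop_of_monotone hf fun b => ?_
  induction b with
  | zero => exact ⟨0, Nat.zero_le _⟩
  | succ b ih =>
    obtain ⟨n, hn⟩ := ih
    obtain ⟨m, hnm, hflip⟩ := hs n
    have hne : f n ≠ f m := fun h => hflip (by simp only [h])
    exact ⟨m, hn.trans_lt ((hf hnm).lt_of_ne hne)⟩

theorem exists_ge_eq_of_le_succ {α : Type*} [LinearOrder α] [SuccOrder α] {f : ℕ → α}
    (hf : ∀ n, f (n + 1) ≤ Order.succ (f n)) {k n : ℕ} (hkn : k ≤ n) {a : α}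
    (hk : f k ≤ a) (hn : a ≤ f n) : ∃ j, k ≤ j ∧ f j = a := by
  induction n, hkn using Nat.le_induction with
  | base => exact ⟨k, le_rfl, hk.antisymm hn⟩
  | succ n hkn ih =>
    rcases le_or_gt a (f n) with h | h
    · exact ih h
    · exact ⟨n + 1, hkn.trans n.le_succ, ((hf n).trans (Order.succ_le_of_lt h)).antisymm hn⟩

theorem FlipsForever.comp {s : ℕ → Prop} {f : ℕ → ℕ} (hs : FlipsForever s)
    (hstep : ∀ n, f (n + 1) ≤ f n + 1) (hf : Tendsto f atTop atTop) :
    FlipsForever fun n => s (f n) := by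
  intro k
  obtain ⟨a, hka, hflip⟩ := hs (f k)
  obtain ⟨n, han, hkn⟩ := ((hf.eventually_ge_atTop a).and (eventually_ge_atTop k)).exists
  obtain ⟨j, hkj, rfl⟩ := exists_ge_eq_of_le_succ hstep hkn hka han
  exact ⟨j, hkj, hflip⟩

theorem IsStutTef.monotone {ι : Type} {τ : ℕ → ι → ℕ} (hτ : IsStutTef τ) (i : ι) :
    Monotone fun n => τ n i :=
  monotone_nat_of_le_succ fun n => hτ n i

theorem IsStutTef.fair_iff_tendsto {ι : Type} {τ : ℕ → ι → ℕ} (hτ : IsStutTef τ) :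
    Fair τ ↔ ∀ i, Tendsto (fun n => τ n i) atTop atTop := by
  simp only [tendsto_atTop_atTop_iff_of_monotone (hτ.monotone _)]
  exact forall_comm

section Semantics

variable {AP ι : Type} {o : AP} {T : ι → Trace AP} {τ : ℕ → ι → ℕ} {φ : EFormula AP}

theorem esat_atom_or_natom : esat T τ (.or (.atom o) (.natom o)) :=
  ⟨fun i => o ∈ T i (τ 0 i), fun i => i.2, fun i => i.2⟩

theorem not_esat_atom_and_natom [Nonempty ι] : ¬esat T τ (.and (.atom o) (.natom o)) :=
  fun ⟨h, h'⟩ => h' (Classical.arbitrary ι) (h _)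

theorem esat_F'_iff : esat T τ (F' o φ) ↔ ∃ k, esat T (shift τ k) φ :=
  exists_congr fun _ => and_iff_left fun _ _ => esat_atom_or_natom

theorem esat_G'_iff [Nonempty ι] : esat T τ (G' o φ) ↔ ∀ k, esat T (shift τ k) φ :=
  forall_congr' fun _ => or_iff_left fun ⟨_, _, h⟩ => not_esat_atom_and_natom h

/-- The formula `(o ∧ F¬o) ∨ (¬o ∧ Fo)` under the temporal operator of `phiFair`: the current
truth value of `o` flips at some point. -/
def eventuallyFlips (o : AP) : EFormula AP :=
  .or (.and (.atom o) (F' o (.natom o))) (.and (.natom o) (F' o (.atom o)))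

theorem esat_eventuallyFlips_iff [Unique ι] :
    esat T τ (eventuallyFlips o) ↔
      ∃ k, ¬(o ∈ T default (τ k default) ↔ o ∈ T default (τ 0 default)) := by
  simp only [eventuallyFlips, esat, esat_F'_iff, shift, zero_add, Subtype.forall,
    Unique.forall_iff]
  constructor
  · rintro ⟨P, ⟨hpos, k, hk⟩, ⟨hneg, l, hl⟩⟩
    by_cases hP : P default
    · exact ⟨k, fun h => hk hP (h.2 (hpos hP))⟩
    · exact ⟨l, fun h => hneg hP (h.1 (hl hP))⟩
  · rintro ⟨k, hk⟩
    -- The subteam not containing the trace is empty, so the same `k` serves both disjuncts.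
    exact ⟨fun i => o ∈ T i (τ 0 i), ⟨id, k, fun h0 hk' => hk (iff_of_true hk' h0)⟩,
      ⟨id, k, fun h0 => not_not.1 fun hk' => hk (iff_of_false hk' h0)⟩⟩

theorem esat_phiFair_iff :
    esat T τ (phiFair o) ↔ ∀ i, FlipsForever fun n => o ∈ T i (τ n i) := by
  refine forall_congr' fun i => esat_G'_iff.trans (forall_congr' fun n => ?_)
  refine esat_eventuallyFlips_iff.trans ?_
  simp only [shift, zero_add]
  constructor
  · rintro ⟨k, hflip⟩
    exact ⟨k + n, n.le_add_left k, hflip⟩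
  · rintro ⟨m, hnm, hflip⟩
    exact ⟨m - n, by rwa [Nat.sub_add_cancel hnm]⟩

end Semantics

theorem phiFair_expresses_fairness_general {AP ι : Type} {o : AP} {T : ι → Trace AP}
    (hT : ∀ i, FlipsForever fun n => o ∈ T i n) {τ : ℕ → ι → ℕ} (hτ : IsStutTef τ)
    (hstep : ∀ n i, τ (n + 1) i ≤ τ n i + 1) :
    esat T τ (phiFair o) ↔ Fair τ := by
  rw [esat_phiFair_iff, hτ.fair_iff_tendsto]
  exact forall_congr' fun i =>
    ⟨fun h => h.tendsto_atTop_of_comp (s := fun n => o ∈ T i n) (hτ.monotone i),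
      (hT i).comp fun n => hstep n i⟩

/-- φ_fair expresses fairness on teams alternating on o. -/
theorem phiFair_expresses_fairness (AP ι : Type) (o : AP)
    (T : ι → Trace AP)
    (halt : ∀ (i : ι) (n : ℕ), o ∈ T i n ↔ Even n)
    (τ : ℕ → ι → ℕ) (hτ : IsTef τ) :
    esat T τ (phiFair o) ↔ Fair τ := by
  have hT (i : ι) : FlipsForever fun n => o ∈ T i n := by
    simpa only [halt] using flipsForever_even
  exact phiFair_expresses_fairness_general hT hτ.1 hτ.2.2

end TTS
end
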